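/- Let G = ℤ² with generating pair S = ((1,0),(0,1)) and parameters a = (α_1, α_2) with α_1, α_2 ∈ (0,2). Let μ_{S,a} be the probability measure on ℤ² giving mass proportional to (1+|m|)^{-α_i-1} to m·e_i for m ∈ ℤ, i = 1,2 (each direction with total weight 1/2). Then the n-fold convolution satisfies μ_{S,a}^{(n)}(0,0) ≍ n^{-1/β} where 1/β = 1/α_1 + 1/α_2, i.e., there exist constants 0 < c ≤ C and constants c_2, c_4 > 0 such that c·(c_2 n)^{-1/β} ≤ μ_{S,a}^{(n)}(0,0) ≤ C·(c_4 n)^{-1/β} for all n ≥ 1. -/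

import Mathlib

/-!
The walk is analysed through its characteristic function. With `χ_α(s) = Σ_m c(α)(1+|m|)^{-α-1}
cos(ms)` the characteristic function of `μ_{S,a}` is `φ(s,t) = (χ_{α₁}(s) + χ_{α₂}(t))/2`, and
Fourier inversion (`convPow_eq`) gives `μ^{(n)}(0) = (2π)⁻² ∫ φⁿ` over `(-π, π]²`.

The analytic input is `1 - χ_α(s) ≍ |s|^α` on `[-π, π]` for `0 < α < 2`. The lower bound
(`gap_lower`) keeps only the frequencies `m ≤ π/|s|`, where `1 - cos(ms)` is comparable to `m²s²`;
the upper bound (`gap_upper`) compares the series with the scale-invariant integral of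
`x^{-α-1} min(2, x²s²)`.

For the upper bound on `μ^{(n)}(0)`, the mass at the origin keeps `φ` away from `-1`, so that
`|φ|ⁿ ≤ exp(-κn(|s|^{α₁} + |t|^{α₂}))`, and the integral of the right side factors into
`const · n^{-1/α₁} · n^{-1/α₂}`. For the lower bound with `n` even, `φⁿ ≥ 0` everywhere and
`φⁿ ≥ 1/2` on a box with side lengths of order `n^{-1/α₁}` and `n^{-1/α₂}`. An odd `n` costs only
the factor `μ(0) > 0`, by holding for one step.
-/

/-- Normalizing constant `c(α)` with `c(α)⁻¹ = Σ_{m∈ℤ} (1+|m|)^{-α-1}`. -/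
noncomputable def cNorm (α : ℝ) : ℝ :=
  (∑' m : ℤ, (1 + |(m : ℝ)|) ^ (-α - 1))⁻¹

/-- The measure `μ_{S,a}` on `ℤ²` for the standard generating pair,
giving mass `(1/2) c(α_i) (1+|m|)^{-α_i-1}` to `m·e_i`. -/
noncomputable def muZ2 (α₁ α₂ : ℝ) (g : ℤ × ℤ) : ℝ :=
  (1 / 2) * (cNorm α₁ * (if g.2 = 0 then (1 + |(g.1 : ℝ)|) ^ (-α₁ - 1) else 0)
    + cNorm α₂ * (if g.1 = 0 then (1 + |(g.2 : ℝ)|) ^ (-α₂ - 1) else 0))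

/-- Convolution of functions on `ℤ²`. -/
noncomputable def convZ2 (μ ν : ℤ × ℤ → ℝ) (x : ℤ × ℤ) : ℝ :=
  ∑' y : ℤ × ℤ, μ y * ν (x - y)

/-- `n`-fold convolution power. -/
noncomputable def convPowZ2 (μ : ℤ × ℤ → ℝ) : ℕ → (ℤ × ℤ → ℝ)
  | 0 => fun x => if x = 0 then 1 else 0
  | n + 1 => convZ2 μ (convPowZ2 μ n)

open Real MeasureTheory

/-! ### The one-dimensional characteristic function -/

/-- The probability weight `c(α) (1+|m|)^{-α-1}` on `ℤ`, the one-dimensional step law. -/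
noncomputable def stepW (α : ℝ) (m : ℤ) : ℝ :=
  cNorm α * (1 + |(m : ℝ)|) ^ (-α - 1)

/-- Characteristic function of the one-dimensional step law; it is real because the law is
symmetric. -/
noncomputable def chi (α : ℝ) (s : ℝ) : ℝ := ∑' m : ℤ, stepW α m * cos (m * s)

lemma HasSum.of_eq {ι : Type*} {f g : ι → ℝ} {a b : ℝ} (h : HasSum f a)
    (hfg : ∀ m, g m = f m) (hab : b = a) : HasSum g b := by
  rw [hab, show g = f from funext hfg]; exact h

lemma summable_raw {α : ℝ} (h : 0 < α) :
    Summable fun m : ℤ => (1 + |(m : ℝ)|) ^ (-α - 1) := by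
  have key : Summable fun n : ℕ => (1 + (n : ℝ)) ^ (-α - 1) := by
    have := (summable_nat_add_iff 1).2 (Real.summable_nat_rpow.2 (by linarith : -α - 1 < -1))
    simpa [add_comm] using this
  rw [summable_int_iff_summable_nat_and_neg]
  constructor <;> simpa using key

lemma cNorm_pos {α : ℝ} (h : 0 < α) : 0 < cNorm α := by
  unfold cNorm
  apply inv_pos.2
  exact (summable_raw h).tsum_pos (fun m => by positivity) 0 (by positivity)

lemma stepW_pos {α : ℝ} (h : 0 < α) (m : ℤ) : 0 < stepW α m := by
  have := cNorm_pos h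
  unfold stepW
  positivity

lemma hasSum_stepW {α : ℝ} (h : 0 < α) : HasSum (stepW α) 1 := by
  have := (summable_raw h).hasSum.mul_left (cNorm α)
  rwa [show cNorm α * ∑' m : ℤ, (1 + |(m : ℝ)|) ^ (-α - 1) = 1 from
    inv_mul_cancel₀ (by have := cNorm_pos h; unfold cNorm at this; exact (inv_pos.1 this).ne')] at this

lemma stepW_neg (α : ℝ) (m : ℤ) : stepW α (-m) = stepW α m := by simp [stepW]

lemma summable_stepW_mul {α : ℝ} (h : 0 < α) {f : ℤ → ℝ} (hf : ∀ m, |f m| ≤ 1) :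
    Summable fun m => stepW α m * f m := by
  refine Summable.of_norm_bounded (hasSum_stepW h).summable fun m => ?_
  rw [norm_mul, Real.norm_eq_abs, Real.norm_eq_abs, abs_of_pos (stepW_pos h m)]
  exact mul_le_of_le_one_right (stepW_pos h m).le (hf m)

lemma hasSum_chi {α : ℝ} (h : 0 < α) (s : ℝ) :
    HasSum (fun m : ℤ => stepW α m * cos (m * s)) (chi α s) :=
  (summable_stepW_mul h fun _ => abs_cos_le_one _).hasSum

/-- Convolving a wave with the step law multiplies it by the characteristic function. -/
lemma hasSum_wave {α : ℝ} (h : 0 < α) (a s : ℝ) :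
    HasSum (fun m : ℤ => stepW α m * cos (a - m * s)) (chi α s * cos a) := by
  have hS := (summable_stepW_mul h (f := fun m : ℤ => sin (m * s))
    fun _ => abs_sin_le_one _).hasSum
  set T := ∑' m : ℤ, stepW α m * sin (m * s)
  -- the sine series is odd in `m`, so it vanishes
  have hT : T = 0 := by
    have h2 := (Equiv.neg ℤ).hasSum_iff.2 hS
    have h3 : HasSum (fun m : ℤ => stepW α m * sin (m * s)) (-T) := by
      refine h2.neg.of_eq (fun m => ?_) rfl
      simp [stepW_neg]
    linarith [hS.unique h3]
  rw [hT] at hS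
  refine (((hasSum_chi h s).mul_right (cos a)).add (hS.mul_right (sin a))).of_eq (fun m => ?_) ?_
  · rw [cos_sub]; ring
  · simp

lemma continuous_chi {α : ℝ} (h : 0 < α) : Continuous (chi α) := by
  refine continuous_tsum (u := stepW α) (fun m => by fun_prop) (hasSum_stepW h).summable
    fun m s => ?_
  rw [norm_mul, Real.norm_eq_abs, Real.norm_eq_abs, abs_of_pos (stepW_pos h m)]
  exact mul_le_of_le_one_right (stepW_pos h m).le (abs_cos_le_one _)

lemma hasSum_one_sub_chi {α : ℝ} (h : 0 < α) (s : ℝ) :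
    HasSum (fun m : ℤ => stepW α m * (1 - cos (m * s))) (1 - chi α s) := by
  exact ((hasSum_stepW h).sub (hasSum_chi h s)).of_eq (fun m => by ring) rfl

lemma chi_le_one {α : ℝ} (h : 0 < α) (s : ℝ) : chi α s ≤ 1 := by
  have := (hasSum_one_sub_chi h s).nonneg fun m =>
    mul_nonneg (stepW_pos h m).le (by linarith [cos_le_one (m * s)])
  linarith

/-- The holding probability at `0` keeps the characteristic function away from `-1`. -/
lemma chi_ge {α : ℝ} (h : 0 < α) (s : ℝ) : 2 * stepW α 0 - 1 ≤ chi α s := by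
  have h1 : HasSum (fun m : ℤ => stepW α m * (1 + cos (m * s))) (1 + chi α s) := by
    exact ((hasSum_stepW h).add (hasSum_chi h s)).of_eq (fun m => by ring) rfl
  have := le_hasSum h1 0 fun m _ =>
    mul_nonneg (stepW_pos h m).le (by linarith [neg_one_le_cos (m * s)])
  simp at this
  linarith

lemma chi_abs (α s : ℝ) : chi α |s| = chi α s := by
  rcases abs_choice s with h | h <;> simp [h, chi]

/-- Lower bound `1 - χ(s) ≥ k |s|^α` on `[-π, π]`: only the frequencies `1 ≤ m ≤ π/|s|` are
needed. -/
lemma gap_lower {α : ℝ} (h : 0 < α) :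
    ∃ k : ℝ, 0 < k ∧ ∀ s : ℝ, |s| ≤ π → k * |s| ^ α ≤ 1 - chi α s := by
  have hc := cNorm_pos h
  have hpi := pi_pos
  -- for `M = ⌊π/s⌋` one has `π/(2s) ≤ M ≤ π/s`; the constant comes from
  -- `c s² (2/π²) (2π/s)^{-α-1} Σ_{m ≤ M} m²` with `Σ_{m ≤ M} m² ≥ M³/3 ≥ (π/(2s))³/3`
  refine ⟨cNorm α * (2 * π) ^ (-α - 1) * (2 / π ^ 2) * ((π / 2) ^ 3 / 3), by positivity, ?_⟩
  suffices H : ∀ s : ℝ, 0 < s → s ≤ π →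
      cNorm α * (2 * π) ^ (-α - 1) * (2 / π ^ 2) * ((π / 2) ^ 3 / 3) * s ^ α ≤ 1 - chi α s by
    intro s hs
    rcases eq_or_ne s 0 with rfl | h0
    · simp [Real.zero_rpow h.ne', chi_le_one h 0]
    · simpa [chi_abs] using H |s| (abs_pos.2 h0) hs
  intro s hs hsp
  set M := ⌊π / s⌋₊
  have hM1 : (M : ℝ) ≤ π / s := Nat.floor_le (by positivity)
  have hM2 : π / s < M + 1 := Nat.lt_floor_add_one _
  have hM3 : (1 : ℝ) ≤ M := by
    exact_mod_cast Nat.floor_pos.2 ((one_le_div hs).2 hsp)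
  have hM4 : π / s / 2 ≤ M := by linarith
  have hsq : ∀ N : ℕ, (N : ℝ) ^ 3 / 3 ≤ ∑ m ∈ Finset.range N, ((m : ℝ) + 1) ^ 2 := by
    intro N
    induction N with
    | zero => simp
    | succ N ih =>
      rw [Finset.sum_range_succ]; push_cast
      nlinarith [(Nat.cast_nonneg N : (0 : ℝ) ≤ N)]
  have hsum : ∑ m ∈ Finset.range M, stepW α ((m : ℤ) + 1) * (1 - cos (((m : ℤ) + 1 : ℤ) * s))
      ≤ 1 - chi α s := by
    have := sum_le_hasSum ((Finset.range M).map
      ⟨fun m : ℕ => (m : ℤ) + 1, fun a b hab => by simpa using hab⟩)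
      (fun m _ => mul_nonneg (stepW_pos h m).le (by linarith [cos_le_one (m * s)]))
      (hasSum_one_sub_chi h s)
    rwa [Finset.sum_map] at this
  refine le_trans ?_ hsum
  have hterm : ∀ m ∈ Finset.range M,
      cNorm α * (2 * π / s) ^ (-α - 1) * (2 / π ^ 2 * s ^ 2) * ((m : ℝ) + 1) ^ 2 ≤
      stepW α ((m : ℤ) + 1) * (1 - cos (((m : ℤ) + 1 : ℤ) * s)) := by
    intro m hm
    have hm' : (m : ℝ) + 1 ≤ M := by exact_mod_cast Finset.mem_range.1 hm
    have h1 : ((m : ℝ) + 1) * s ≤ π := by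
      have := (le_div_iff₀ hs).1 (hm'.trans hM1); exact this
    have h2 := cos_le_one_sub_mul_cos_sq (x := ((m : ℝ) + 1) * s)
      (by rw [abs_of_nonneg (by positivity)]; exact h1)
    have h3 : (2 * π / s) ^ (-α - 1) ≤ (1 + |(((m : ℤ) + 1 : ℤ) : ℝ)|) ^ (-α - 1) := by
      apply Real.rpow_le_rpow_of_nonpos (by positivity)
      · push_cast
        rw [abs_of_nonneg (by positivity)]
        have : 2 * π / s = 2 * (π / s) := by ring
        linarith
      · linarith
    unfold stepW
    rw [mul_assoc, mul_assoc, mul_assoc (cNorm α)]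
    refine mul_le_mul_of_nonneg_left (mul_le_mul h3 ?_ (by positivity) (by positivity)) hc.le
    push_cast
    nlinarith
  refine le_trans ?_ (Finset.sum_le_sum hterm)
  rw [← Finset.mul_sum]
  have h5 : (π / s / 2) ^ 3 / 3 ≤ ∑ m ∈ Finset.range M, ((m : ℝ) + 1) ^ 2 :=
    le_trans (by gcongr) (hsq M)
  refine le_trans (le_of_eq ?_) (mul_le_mul_of_nonneg_left h5 (by positivity))
  rw [Real.div_rpow (by positivity) hs.le]
  have : s ^ (-α - 1) = (s ^ α * s)⁻¹ := by
    rw [show -α - 1 = -(α + 1) by ring, Real.rpow_neg hs.le, Real.rpow_add_one hs.ne']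
  rw [this]
  field_simp

/-- The profile `u^{-α-1} min(2, u²)`, meant for `u > 0`: its rescalings dominate the terms of the
series for `1 - χ`. -/
noncomputable def kern (α u : ℝ) : ℝ := u ^ (-α - 1) * min 2 (u ^ 2)

lemma kern_nonneg {α u : ℝ} (hu : 0 ≤ u) : 0 ≤ kern α u := by unfold kern; positivity

/-- Integrability at `0` uses `α < 2`, at infinity `0 < α`. -/
lemma kern_integrableOn {α : ℝ} (h : 0 < α) (h' : α < 2) :
    IntegrableOn (kern α) (Set.Ioi 0) := by
  have hm : Measurable (kern α) := by unfold kern; fun_prop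
  rw [← Set.Ioc_union_Ioi_eq_Ioi (zero_le_one' ℝ)]
  refine IntegrableOn.union ?_ ?_
  · have : IntegrableOn (fun u : ℝ => u ^ (1 - α)) (Set.Ioc 0 1) :=
      (intervalIntegrable_iff_integrableOn_Ioc_of_le zero_le_one).1
        (intervalIntegral.intervalIntegrable_rpow' (by linarith))
    refine Integrable.mono' this hm.aestronglyMeasurable ?_
    refine (ae_restrict_iff' measurableSet_Ioc).2 (.of_forall fun u hu => ?_)
    rw [Real.norm_of_nonneg (kern_nonneg hu.1.le)]
    calc kern α u ≤ u ^ (-α - 1) * u ^ 2 := by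
          unfold kern; have := hu.1; gcongr; exact min_le_right _ _
      _ = u ^ (1 - α) := by
          rw [← Real.rpow_natCast, ← Real.rpow_add hu.1]; congr 1; push_cast; ring
  · have : IntegrableOn (fun u : ℝ => u ^ (-α - 1) * 2) (Set.Ioi 1) :=
      (integrableOn_Ioi_rpow_of_lt (by linarith) one_pos).mul_const 2
    refine Integrable.mono' this hm.aestronglyMeasurable ?_
    refine (ae_restrict_iff' measurableSet_Ioi).2 (.of_forall fun u hu => ?_)
    have hu0 : 0 < u := lt_trans one_pos hu
    rw [Real.norm_of_nonneg (kern_nonneg hu0.le)]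
    unfold kern; gcongr; exact min_le_left _ _

/-- Upper bound `1 - χ(s) ≤ K |s|^α`: each term is dominated by the integral of
`x^{-α-1} min(2, x²s²)` over `[m, m+1]`, and rescaling gives the factor `|s|^α`. -/
lemma gap_upper {α : ℝ} (h : 0 < α) (h' : α < 2) :
    ∃ K : ℝ, 0 < K ∧ ∀ s : ℝ, 1 - chi α s ≤ K * |s| ^ α := by
  have hc := cNorm_pos h
  set J := ∫ u in Set.Ioi (0 : ℝ), kern α u
  have hJ : 0 ≤ J := setIntegral_nonneg measurableSet_Ioi fun u hu => kern_nonneg (le_of_lt hu)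
  refine ⟨2 * cNorm α * J + 1, by positivity, ?_⟩
  suffices H : ∀ s : ℝ, 0 < s → 1 - chi α s ≤ 2 * cNorm α * J * s ^ α by
    intro s
    rcases eq_or_ne s 0 with rfl | h0
    · have : chi α 0 = 1 := by
        have := (hasSum_chi h 0).unique (by simpa using hasSum_stepW h)
        exact this
      simp [Real.zero_rpow h.ne', this]
    · have := H |s| (abs_pos.2 h0)
      rw [chi_abs] at this
      have h2 : 0 ≤ |s| ^ α := by positivity
      linarith
  intro s hs
  -- `g x = x^{-α-1} min(2, x²s²)`, with total integral `J s^α`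
  set g : ℝ → ℝ := fun x => s ^ (α + 1) * kern α (s * x) with hg
  have hgk : ∀ x, 0 < x → g x = x ^ (-α - 1) * min 2 ((s * x) ^ 2) := by
    intro x hx
    simp only [hg, kern]
    rw [Real.mul_rpow hs.le hx.le, ← mul_assoc, ← mul_assoc, ← Real.rpow_add hs]
    simp
  have hgi : IntegrableOn g (Set.Ioi 0) := by
    refine Integrable.const_mul ?_ _
    have := (integrableOn_Ioi_comp_mul_left_iff (kern α) 0 hs).2
      (by simpa using kern_integrableOn h h')
    exact this
  have hgI : ∫ x in Set.Ioi (0 : ℝ), g x = J * s ^ α := by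
    simp only [hg]
    rw [integral_const_mul, integral_comp_mul_left_Ioi (kern α) 0 hs, mul_zero,
      Real.rpow_add_one hs.ne']
    simp only [smul_eq_mul]
    field_simp
    rfl
  have hg0 : ∀ x, 0 < x → 0 ≤ g x := fun x hx => by rw [hgk x hx]; positivity
  set a : ℕ → ℝ := fun m => (1 + (m : ℝ)) ^ (-α - 1) * (1 - cos (m * s)) with ha
  have ha0 : ∀ m, 0 ≤ a m := fun m =>
    mul_nonneg (by positivity) (by linarith [cos_le_one (m * s)])
  have hgint : ∀ p q : ℝ, 0 ≤ p → p ≤ q → IntervalIntegrable g volume p q := by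
    intro p q hp hpq
    rw [intervalIntegrable_iff_integrableOn_Ioc_of_le hpq]
    exact hgi.mono_set fun x hx => lt_of_le_of_lt hp hx.1
  have ham : ∀ m : ℕ, a m ≤ ∫ x in (m : ℝ)..((m + 1 : ℕ) : ℝ), g x := by
    intro m
    have hle : (m : ℝ) ≤ ((m + 1 : ℕ) : ℝ) := by push_cast; linarith
    have : a m = ∫ x in (m : ℝ)..((m + 1 : ℕ) : ℝ), a m := by simp
    rw [this]
    refine intervalIntegral.integral_mono_on_of_le_Ioo hle (by simp)
      (hgint _ _ (by positivity) hle) fun x hx => ?_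
    have hm0 : (0 : ℝ) ≤ m := by positivity
    have hx0 : 0 < x := lt_of_le_of_lt hm0 hx.1
    rw [hgk x hx0]
    have hx2 := hx.2
    push_cast at hx2
    refine mul_le_mul (Real.rpow_le_rpow_of_nonpos hx0 (by linarith) (by linarith)) ?_
      (by linarith [cos_le_one (m * s)]) (by positivity)
    refine le_min (by linarith [neg_one_le_cos (m * s)]) ?_
    have h1 := one_sub_sq_div_two_le_cos (x := m * s)
    have h2 : (m * s) ^ 2 ≤ (s * x) ^ 2 := by
      rw [mul_comm]
      have := hx.1.le
      gcongr
    nlinarith [sq_nonneg (m * s)]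
  have hpart : ∀ N : ℕ, ∑ m ∈ Finset.range N, a m ≤ J * s ^ α := by
    intro N
    calc ∑ m ∈ Finset.range N, a m
        ≤ ∑ m ∈ Finset.range N, ∫ x in (m : ℝ)..((m + 1 : ℕ) : ℝ), g x :=
          Finset.sum_le_sum fun m _ => ham m
      _ = ∫ x in ((0 : ℕ) : ℝ)..(N : ℝ), g x :=
          intervalIntegral.sum_integral_adjacent_intervals (a := fun m : ℕ => (m : ℝ))
            fun m _ => hgint _ _ (by positivity) (by push_cast; linarith)
      _ ≤ J * s ^ α := by
          rw [intervalIntegral.integral_of_le (by simp), ← hgI]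
          refine setIntegral_mono_set hgi ?_ ?_
          · exact (ae_restrict_iff' measurableSet_Ioi).2 (.of_forall fun x hx => hg0 x hx)
          · refine LE.le.eventuallyLE fun x hx => ?_
            simpa using hx.1
  have hsa : Summable a := summable_of_sum_range_le ha0 hpart
  have hta : ∑' m, a m ≤ J * s ^ α := hsa.tsum_le_of_sum_range_le hpart
  have hta1 : ∑' m, a (m + 1) ≤ J * s ^ α := by
    have := hsa.tsum_eq_zero_add
    linarith [ha0 0]
  have hint : HasSum (fun m : ℤ => (1 + |(m : ℝ)|) ^ (-α - 1) * (1 - cos (m * s)))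
      (∑' m, a m + ∑' m, a (m + 1)) := by
    refine HasSum.of_nat_of_neg_add_one ?_ ?_
    · refine hsa.hasSum.of_eq (fun m => ?_) rfl
      simp [ha]
    · refine ((summable_nat_add_iff 1).2 hsa).hasSum.of_eq (fun m => ?_) rfl
      simp only [ha]
      push_cast
      rw [abs_neg, abs_of_nonneg (by positivity), neg_mul, cos_neg]
  have heq := (hasSum_one_sub_chi h s).unique (by
    exact (hint.mul_left (cNorm α)).of_eq (fun m => by simp only [stepW]; ring) rfl)
  rw [heq]
  nlinarith

/-! ### Fourier inversion on `ℤ²` -/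

/-- Characteristic function of `muZ2`. -/
noncomputable def phi (α₁ α₂ : ℝ) (θ : ℝ × ℝ) : ℝ := (chi α₁ θ.1 + chi α₂ θ.2) / 2

/-- Lebesgue measure on the period box `(-π, π]²`. -/
noncomputable def boxMeas : Measure (ℝ × ℝ) :=
  (volume.restrict (Set.Ioc (-π) π)).prod (volume.restrict (Set.Ioc (-π) π))

instance : IsFiniteMeasure boxMeas := by unfold boxMeas; infer_instance

lemma muZ2_nonneg {α₁ α₂ : ℝ} (h₁ : 0 < α₁) (h₂ : 0 < α₂) (y : ℤ × ℤ) :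
    0 ≤ muZ2 α₁ α₂ y := by
  have := cNorm_pos h₁
  have := cNorm_pos h₂
  unfold muZ2
  positivity

/-- Sums against `muZ2` split into sums over the two coordinate axes. The origin lies on both,
which is why `muZ2 (0, 0)` contains two terms. -/
lemma hasSum_muZ2 {α₁ α₂ a b : ℝ} (f : ℤ × ℤ → ℝ)
    (ha : HasSum (fun m : ℤ => stepW α₁ m * f (m, 0)) a)
    (hb : HasSum (fun m : ℤ => stepW α₂ m * f (0, m)) b) :
    HasSum (fun y => muZ2 α₁ α₂ y * f y) ((a + b) / 2) := by
  have h1 : HasSum (fun y : ℤ × ℤ => if y.2 = 0 then stepW α₁ y.1 * f y else 0) a := by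
    refine (Function.Injective.hasSum_iff (g := fun m : ℤ => (m, (0 : ℤ))) ?_ ?_).1 ?_
    · intro m n h; simpa using h
    · rintro ⟨m, n⟩ h
      have : n ≠ 0 := fun h0 => h ⟨m, by simp [h0]⟩
      simp [this]
    · exact ha.of_eq (fun m => by simp) rfl
  have h2 : HasSum (fun y : ℤ × ℤ => if y.1 = 0 then stepW α₂ y.2 * f y else 0) b := by
    refine (Function.Injective.hasSum_iff (g := fun m : ℤ => ((0 : ℤ), m)) ?_ ?_).1 ?_
    · intro m n h; simpa using h
    · rintro ⟨m, n⟩ h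
      have : m ≠ 0 := fun h0 => h ⟨n, by simp [h0]⟩
      simp [this]
    · exact hb.of_eq (fun m => by simp) rfl
  refine ((h1.add h2).div_const 2).of_eq (fun y => ?_) rfl
  simp only [muZ2, stepW]
  split_ifs <;> ring

lemma hasSum_muZ2_one {α₁ α₂ : ℝ} (h₁ : 0 < α₁) (h₂ : 0 < α₂) :
    HasSum (muZ2 α₁ α₂) 1 := by
  refine (hasSum_muZ2 (α₁ := α₁) (α₂ := α₂) (fun _ => 1) ((hasSum_stepW h₁).of_eq (fun m => by simp) rfl)
    ((hasSum_stepW h₂).of_eq (fun m => by simp) rfl)).of_eq (fun y => by simp) (by norm_num)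

lemma hasSum_muZ2_wave {α₁ α₂ : ℝ} (h₁ : 0 < α₁) (h₂ : 0 < α₂) (x : ℤ × ℤ) (θ : ℝ × ℝ) :
    HasSum (fun y : ℤ × ℤ => muZ2 α₁ α₂ y *
        cos (((x - y).1 : ℤ) * θ.1 + ((x - y).2 : ℤ) * θ.2))
      (phi α₁ α₂ θ * cos (x.1 * θ.1 + x.2 * θ.2)) := by
  refine (hasSum_muZ2 _
    ((hasSum_wave h₁ (x.1 * θ.1 + x.2 * θ.2) θ.1).of_eq (fun m => ?_) rfl)
    ((hasSum_wave h₂ (x.1 * θ.1 + x.2 * θ.2) θ.2).of_eq (fun m => ?_) rfl)).of_eq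
    (fun _ => rfl) (by unfold phi; ring)
  · congr 2; simp; ring
  · congr 2; simp; ring

lemma continuous_phi {α₁ α₂ : ℝ} (h₁ : 0 < α₁) (h₂ : 0 < α₂) : Continuous (phi α₁ α₂) := by
  have := continuous_chi h₁
  have := continuous_chi h₂
  unfold phi
  fun_prop

lemma abs_phi_le_one {α₁ α₂ : ℝ} (h₁ : 0 < α₁) (h₂ : 0 < α₂) (θ : ℝ × ℝ) :
    |phi α₁ α₂ θ| ≤ 1 := by
  have := chi_le_one h₁ θ.1
  have := chi_le_one h₂ θ.2
  have := chi_ge h₁ θ.1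
  have := chi_ge h₂ θ.2
  have := stepW_pos h₁ 0
  have := stepW_pos h₂ 0
  unfold phi
  rw [abs_le]
  constructor <;> linarith

lemma integrable_box {f : ℝ × ℝ → ℝ} (hf : Continuous f) (C : ℝ) (hC : ∀ θ, |f θ| ≤ C) :
    Integrable f boxMeas :=
  Integrable.of_bound hf.aestronglyMeasurable C (.of_forall hC)

/-- The Fourier coefficient at `x` of the `n`-th power of the characteristic function, without the
factor `(2π)⁻²`. -/
noncomputable def fourierInt (α₁ α₂ : ℝ) (n : ℕ) (x : ℤ × ℤ) : ℝ :=
  ∫ θ, phi α₁ α₂ θ ^ n * cos (x.1 * θ.1 + x.2 * θ.2) ∂boxMeas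

lemma abs_integrand_le {α₁ α₂ : ℝ} (h₁ : 0 < α₁) (h₂ : 0 < α₂) (n : ℕ) (r : ℝ) (θ : ℝ × ℝ) :
    |phi α₁ α₂ θ ^ n * cos r| ≤ 1 := by
  rw [abs_mul, abs_pow]
  exact mul_le_one₀ (pow_le_one₀ (abs_nonneg _) (abs_phi_le_one h₁ h₂ θ)) (abs_nonneg _)
    (abs_cos_le_one _)

lemma integrable_phi_pow {α₁ α₂ : ℝ} (h₁ : 0 < α₁) (h₂ : 0 < α₂) (n : ℕ) :
    Integrable (fun θ => phi α₁ α₂ θ ^ n) boxMeas :=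
  integrable_box (f := fun θ => phi α₁ α₂ θ ^ n) ((continuous_phi h₁ h₂).pow n) 1 fun θ => by
    rw [abs_pow]; exact pow_le_one₀ (abs_nonneg _) (abs_phi_le_one h₁ h₂ θ)

/-- Convolving with `muZ2` multiplies the integrand by the characteristic function. Stated as a
`HasSum`, since the later comparison with a single term of the convolution needs convergence. -/
lemma fourierInt_step {α₁ α₂ : ℝ} (h₁ : 0 < α₁) (h₂ : 0 < α₂) (n : ℕ) (x : ℤ × ℤ) :
    HasSum (fun y => muZ2 α₁ α₂ y * fourierInt α₁ α₂ n (x - y))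
      (fourierInt α₁ α₂ (n + 1) x) := by
  have hphi := continuous_phi h₁ h₂
  set F : ℤ × ℤ → ℝ × ℝ → ℝ := fun y θ => muZ2 α₁ α₂ y *
    (phi α₁ α₂ θ ^ n * cos (((x - y).1 : ℤ) * θ.1 + ((x - y).2 : ℤ) * θ.2)) with hF
  have hb : ∀ y θ, |F y θ| ≤ muZ2 α₁ α₂ y := fun y θ => by
    simp only [hF]
    rw [abs_mul, abs_of_nonneg (muZ2_nonneg h₁ h₂ y)]
    exact mul_le_of_le_one_right (muZ2_nonneg h₁ h₂ y) (abs_integrand_le h₁ h₂ _ _ _)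
  have hint : ∀ y, Integrable (F y) boxMeas := fun y =>
    integrable_box (by simp only [hF]; fun_prop) _ (hb y)
  have hsum : Summable fun y => ∫ θ, ‖F y θ‖ ∂boxMeas := by
    refine Summable.of_nonneg_of_le (fun y => integral_nonneg fun θ => norm_nonneg _) (fun y => ?_)
      ((hasSum_muZ2_one h₁ h₂).summable.mul_right (boxMeas.real Set.univ))
    calc ∫ θ, ‖F y θ‖ ∂boxMeas ≤ ∫ θ, muZ2 α₁ α₂ y ∂boxMeas :=
          integral_mono (hint y).norm (integrable_const _) (hb y)
      _ = _ := by rw [integral_const, smul_eq_mul, mul_comm]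
  refine (hasSum_integral_of_summable_integral_norm hint hsum).of_eq (fun y => ?_) ?_
  · simp only [hF, fourierInt]
    rw [integral_const_mul]
  · simp only [fourierInt]
    congr 1
    ext θ
    rw [((((hasSum_muZ2_wave h₁ h₂ x θ).mul_left (phi α₁ α₂ θ ^ n)).of_eq
      (fun y => by simp only [hF]; ring) rfl :
      HasSum (fun y => F y θ) _)).tsum_eq]
    ring

lemma integral_cos_box (m : ℤ) :
    ∫ s in Set.Ioc (-π) π, cos (m * s) = if m = 0 then 2 * π else 0 := by
  rw [← intervalIntegral.integral_of_le (by linarith [pi_pos])]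
  split_ifs with h
  · simp [h]; ring
  · have : (m : ℝ) ≠ 0 := by exact_mod_cast h
    rw [intervalIntegral.integral_comp_mul_left _ this]
    simp

lemma integral_sin_box (m : ℤ) : ∫ s in Set.Ioc (-π) π, sin (m * s) = 0 := by
  rw [← intervalIntegral.integral_of_le (by linarith [pi_pos])]
  rcases eq_or_ne m 0 with h | h
  · simp [h]
  · have : (m : ℝ) ≠ 0 := by exact_mod_cast h
    rw [intervalIntegral.integral_comp_mul_left _ this]
    simp

lemma fourierInt_zero (α₁ α₂ : ℝ) (x : ℤ × ℤ) :
    fourierInt α₁ α₂ 0 x = if x = 0 then (2 * π) ^ 2 else 0 := by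
  have h1 : ∫ θ : ℝ × ℝ, cos (x.1 * θ.1) * cos (x.2 * θ.2) ∂boxMeas =
      (if x.1 = 0 then 2 * π else 0) * (if x.2 = 0 then 2 * π else 0) := by
    rw [← integral_cos_box, ← integral_cos_box]
    exact integral_prod_mul (fun s : ℝ => cos (x.1 * s)) (fun t : ℝ => cos (x.2 * t))
  have h2 : ∫ θ : ℝ × ℝ, sin (x.1 * θ.1) * sin (x.2 * θ.2) ∂boxMeas = 0 := by
    refine (integral_prod_mul (fun s : ℝ => sin (x.1 * s)) (fun t : ℝ => sin (x.2 * t))).trans ?_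
    simp only [integral_sin_box, mul_zero]
  have h3 : fourierInt α₁ α₂ 0 x =
      ∫ θ : ℝ × ℝ, (cos (x.1 * θ.1) * cos (x.2 * θ.2) - sin (x.1 * θ.1) * sin (x.2 * θ.2))
        ∂boxMeas := by
    simp only [fourierInt, pow_zero, one_mul, cos_add]
  rw [h3, integral_sub, h1, h2, sub_zero]
  · obtain ⟨p, q⟩ := x
    by_cases hp : p = 0 <;> by_cases hq : q = 0 <;> simp [hp, hq, sq]
  · exact integrable_box (by fun_prop) 1 fun θ => by
      rw [abs_mul]
      exact mul_le_one₀ (abs_cos_le_one _) (abs_nonneg _) (abs_cos_le_one _)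
  · exact integrable_box (by fun_prop) 1 fun θ => by
      rw [abs_mul]
      exact mul_le_one₀ (abs_sin_le_one _) (abs_nonneg _) (abs_sin_le_one _)

/-- Fourier inversion for the convolution powers of `muZ2`. -/
lemma convPow_eq {α₁ α₂ : ℝ} (h₁ : 0 < α₁) (h₂ : 0 < α₂) (n : ℕ) :
    ∀ x, convPowZ2 (muZ2 α₁ α₂) n x = fourierInt α₁ α₂ n x / (2 * π) ^ 2 := by
  have hpi := pi_pos
  induction n with
  | zero =>
    intro x
    rw [fourierInt_zero]
    simp only [convPowZ2]
    split_ifs <;> simp [hpi.ne']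
  | succ n ih =>
    intro x
    simp only [convPowZ2, convZ2, ih]
    exact (((fourierInt_step h₁ h₂ n x).div_const ((2 * π) ^ 2)).of_eq
      (fun y => (mul_div_assoc _ _ _).symm) rfl).tsum_eq

lemma convPow_nonneg {α₁ α₂ : ℝ} (h₁ : 0 < α₁) (h₂ : 0 < α₂) (n : ℕ) :
    ∀ x, 0 ≤ convPowZ2 (muZ2 α₁ α₂) n x := by
  induction n with
  | zero => intro x; simp only [convPowZ2]; positivity
  | succ n ih => exact fun x => tsum_nonneg fun y => mul_nonneg (muZ2_nonneg h₁ h₂ y) (ih _)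

/-- Return at time `n` followed by holding for one step is one way to return at time `n + 1`. -/
lemma convPow_succ_ge {α₁ α₂ : ℝ} (h₁ : 0 < α₁) (h₂ : 0 < α₂) (n : ℕ) :
    muZ2 α₁ α₂ 0 * convPowZ2 (muZ2 α₁ α₂) n 0 ≤ convPowZ2 (muZ2 α₁ α₂) (n + 1) 0 := by
  have h := ((fourierInt_step h₁ h₂ n 0).div_const ((2 * π) ^ 2)).of_eq
    (g := fun y => muZ2 α₁ α₂ y * convPowZ2 (muZ2 α₁ α₂) n (0 - y))
    (fun y => by rw [convPow_eq h₁ h₂, mul_div_assoc]) (convPow_eq h₁ h₂ (n + 1) 0)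
  simpa using le_hasSum h 0
    fun y _ => mul_nonneg (muZ2_nonneg h₁ h₂ y) (convPow_nonneg h₁ h₂ n _)

lemma convPow_zero_eq {α₁ α₂ : ℝ} (h₁ : 0 < α₁) (h₂ : 0 < α₂) (n : ℕ) :
    convPowZ2 (muZ2 α₁ α₂) n 0 = (∫ θ, phi α₁ α₂ θ ^ n ∂boxMeas) / (2 * π) ^ 2 := by
  rw [convPow_eq h₁ h₂]
  simp [fourierInt]

/-! ### Bounds on the return probability -/

lemma integral_exp_neg_mul_abs_rpow {p b : ℝ} (hp : 0 < p) (hb : 0 < b) :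
    ∫ s : ℝ, rexp (-b * |s| ^ p) = 2 * (b ^ (-1 / p) * Gamma (1 / p + 1)) := by
  rw [integral_comp_abs (f := fun s => rexp (-b * s ^ p)), integral_exp_neg_mul_rpow hp hb]

lemma integrable_exp_neg_mul_abs_rpow {p b : ℝ} (hp : 0 < p) (hb : 0 < b) :
    Integrable fun s : ℝ => rexp (-b * |s| ^ p) := by
  -- the Bochner integral of a non-integrable function would be `0`
  refine not_imp_comm.1 integral_undef ?_
  rw [integral_exp_neg_mul_abs_rpow hp hb]
  have := Gamma_pos_of_pos (s := 1 / p + 1) (by positivity)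
  positivity

/-- Exponential bound for `|p|` in terms of a lower bound `g` for `1 - p`, used with `p` a value
of the characteristic function. Positive `p` are covered by `1 - x ≤ e^{-x}`; negative `p` are
harmless because they stay at distance `2δ` from `-1`. -/
lemma abs_le_exp_of_gap {δ p g : ℝ} (hδ : 0 < δ) (hδ1 : δ ≤ 1) (hp : 2 * δ - 1 ≤ p)
    (hg : g ≤ 1 - p) (hg0 : 0 ≤ g) : |p| ≤ rexp (-(δ * g)) := by
  have h := Real.add_one_le_exp (-(δ * g))
  refine le_trans ?_ h
  rw [abs_le]
  constructor <;> nlinarith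

/-- The integrand `φⁿ` is dominated by `exp (-κn (|s|^α₁ + |t|^α₂))`, whose integral over the whole
plane is an explicit product of Gamma integrals. -/
lemma exists_upper {α₁ α₂ : ℝ} (h₁ : 0 < α₁) (h₂ : 0 < α₂) :
    ∃ C κ : ℝ, 0 < C ∧ 0 < κ ∧ ∀ n : ℕ, 1 ≤ n →
      convPowZ2 (muZ2 α₁ α₂) n 0 ≤ C * (κ * n) ^ (-(1 / α₁ + 1 / α₂)) := by
  have hpi := pi_pos
  obtain ⟨k₁, hk₁, H₁⟩ := gap_lower h₁
  obtain ⟨k₂, hk₂, H₂⟩ := gap_lower h₂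
  have hw₁ := stepW_pos h₁ 0
  have hw₂ := stepW_pos h₂ 0
  have hw₁' : stepW α₁ 0 ≤ 1 := le_hasSum (hasSum_stepW h₁) 0 fun m _ => (stepW_pos h₁ m).le
  have hw₂' : stepW α₂ 0 ≤ 1 := le_hasSum (hasSum_stepW h₂) 0 fun m _ => (stepW_pos h₂ m).le
  set δ := (stepW α₁ 0 + stepW α₂ 0) / 2
  set k := min k₁ k₂ / 2
  have hδ : 0 < δ := by positivity
  have hk : 0 < k := by positivity
  have hG₁ := Gamma_pos_of_pos (s := 1 / α₁ + 1) (by positivity)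
  have hG₂ := Gamma_pos_of_pos (s := 1 / α₂ + 1) (by positivity)
  refine ⟨(2 * Gamma (1 / α₁ + 1)) * (2 * Gamma (1 / α₂ + 1)) / (2 * π) ^ 2, δ * k,
    by positivity, by positivity, fun n hn => ?_⟩
  have hn0 : (0 : ℝ) < n := by exact_mod_cast hn
  set b := δ * k * n
  have hb : 0 < b := by positivity
  set E : ℝ × ℝ → ℝ := fun θ => rexp (-b * |θ.1| ^ α₁) * rexp (-b * |θ.2| ^ α₂)
  have hE : Integrable E (volume.prod volume) :=
    (integrable_exp_neg_mul_abs_rpow h₁ hb).mul_prod (integrable_exp_neg_mul_abs_rpow h₂ hb)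
  have hmeas : boxMeas = (volume.prod volume).restrict (Set.Ioc (-π) π ×ˢ Set.Ioc (-π) π) :=
    Measure.prod_restrict _ _
  have hpt : ∀ θ ∈ Set.Ioc (-π) π ×ˢ Set.Ioc (-π) π, phi α₁ α₂ θ ^ n ≤ E θ := by
    rintro ⟨s, t⟩ ⟨hs, ht⟩
    have hs' : |s| ≤ π := abs_le.2 ⟨hs.1.le, hs.2⟩
    have ht' : |t| ≤ π := abs_le.2 ⟨ht.1.le, ht.2⟩
    have e1 := H₁ s hs'
    have e2 := H₂ t ht'
    have p1 : 0 ≤ |s| ^ α₁ := by positivity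
    have p2 : 0 ≤ |t| ^ α₂ := by positivity
    have m1 : 2 * k ≤ k₁ := by have := min_le_left k₁ k₂; simp only [k]; linarith
    have m2 : 2 * k ≤ k₂ := by have := min_le_right k₁ k₂; simp only [k]; linarith
    have hkey : |phi α₁ α₂ (s, t)| ≤ rexp (-(δ * (k * (|s| ^ α₁ + |t| ^ α₂)))) := by
      refine abs_le_exp_of_gap hδ (by simp only [δ]; linarith) ?_ ?_ (by positivity)
      · have := chi_ge h₁ s
        have := chi_ge h₂ t
        simp only [phi, δ]; linarith
      · simp only [phi]
        nlinarith [mul_le_mul_of_nonneg_right m1 p1, mul_le_mul_of_nonneg_right m2 p2]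
    calc phi α₁ α₂ (s, t) ^ n ≤ |phi α₁ α₂ (s, t)| ^ n := by
          rw [← abs_pow]; exact le_abs_self _
      _ ≤ rexp (-(δ * (k * (|s| ^ α₁ + |t| ^ α₂)))) ^ n := by gcongr
      _ = E (s, t) := by
          simp only [E, b]
          rw [← Real.exp_nat_mul, ← Real.exp_add]; congr 1; ring
  have hI : ∫ θ, phi α₁ α₂ θ ^ n ∂boxMeas ≤
      (2 * Gamma (1 / α₁ + 1)) * (2 * Gamma (1 / α₂ + 1)) * b ^ (-(1 / α₁ + 1 / α₂)) := by
    calc ∫ θ, phi α₁ α₂ θ ^ n ∂boxMeas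
        ≤ ∫ θ, E θ ∂boxMeas := by
          rw [hmeas]
          refine setIntegral_mono_on ?_ hE.integrableOn
            (measurableSet_Ioc.prod measurableSet_Ioc) hpt
          have := integrable_phi_pow h₁ h₂ n
          rwa [hmeas] at this
      _ ≤ ∫ θ, E θ ∂(volume.prod volume) := by
          rw [hmeas]
          exact setIntegral_le_integral hE (.of_forall fun θ => by positivity)
      _ = _ := by
          refine (integral_prod_mul (fun s : ℝ => rexp (-b * |s| ^ α₁))
            (fun t : ℝ => rexp (-b * |t| ^ α₂))).trans ?_
          rw [integral_exp_neg_mul_abs_rpow h₁ hb, integral_exp_neg_mul_abs_rpow h₂ hb,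
            show -(1 / α₁ + 1 / α₂) = -1 / α₁ + -1 / α₂ by ring, Real.rpow_add hb]
          ring
  rw [convPow_zero_eq h₁ h₂, div_mul_eq_mul_div]
  gcongr

/-- For even exponents the integrand is nonnegative, so it may be restricted to the box
`|s| ≤ (K(n+1))^{-1/α₁}`, `|t| ≤ (K(n+1))^{-1/α₂}`, on which `φⁿ ≥ 1/2`. The shift to `n + 1` lets
the bound include `n = 0`. -/
lemma exists_lower_even {α₁ α₂ : ℝ} (h₁ : 0 < α₁) (h₁' : α₁ < 2) (h₂ : 0 < α₂) (h₂' : α₂ < 2) :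
    ∃ c : ℝ, 0 < c ∧ ∀ n : ℕ, Even n →
      c * ((n : ℝ) + 1) ^ (-(1 / α₁ + 1 / α₂)) ≤ convPowZ2 (muZ2 α₁ α₂) n 0 := by
  have hpi := pi_pos
  obtain ⟨K₁, hK₁, H₁⟩ := gap_upper h₁ h₁'
  obtain ⟨K₂, hK₂, H₂⟩ := gap_upper h₂ h₂'
  -- large enough that the small box lies in `(-π, π]²` and `1 - φ ≤ 1/(2(n+1))` there
  set K := 2 * (K₁ + K₂) + 1
  have hK : 1 ≤ K := by simp only [K]; linarith
  have hK0 : 0 < K := by linarith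
  refine ⟨2 * K ^ (-(1 / α₁ + 1 / α₂)) / (2 * π) ^ 2, by positivity, fun n hn => ?_⟩
  set N : ℝ := (n : ℝ) + 1
  have hN : 1 ≤ N := by simp [N]
  have hN0 : 0 < N := by linarith
  set r₁ := (K * N) ^ (-(1 / α₁))
  set r₂ := (K * N) ^ (-(1 / α₂))
  have hKN : 1 ≤ K * N := one_le_mul_of_one_le_of_one_le hK hN
  have hr₁ : 0 < r₁ := by positivity
  have hr₂ : 0 < r₂ := by positivity
  have hr₁1 : r₁ ≤ 1 := Real.rpow_le_one_of_one_le_of_nonpos hKN (by simp; positivity)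
  have hr₂1 : r₂ ≤ 1 := Real.rpow_le_one_of_one_le_of_nonpos hKN (by simp; positivity)
  have e₁ : r₁ ^ α₁ = (K * N)⁻¹ := by
    simp only [r₁]
    rw [← Real.rpow_mul (by positivity), show -(1 / α₁) * α₁ = -1 by field_simp, Real.rpow_neg_one]
  have e₂ : r₂ ^ α₂ = (K * N)⁻¹ := by
    simp only [r₂]
    rw [← Real.rpow_mul (by positivity), show -(1 / α₂) * α₂ = -1 by field_simp, Real.rpow_neg_one]
  set B : Set (ℝ × ℝ) := Set.Ioc (-r₁) r₁ ×ˢ Set.Ioc (-r₂) r₂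
  have hBm : MeasurableSet B := measurableSet_Ioc.prod measurableSet_Ioc
  have hmeas : boxMeas = (volume.prod volume).restrict (Set.Ioc (-π) π ×ˢ Set.Ioc (-π) π) :=
    Measure.prod_restrict _ _
  have hB : B ⊆ Set.Ioc (-π) π ×ˢ Set.Ioc (-π) π := by
    have := pi_gt_three
    exact Set.prod_mono (Set.Ioc_subset_Ioc (by linarith) (by linarith))
      (Set.Ioc_subset_Ioc (by linarith) (by linarith))
  have hint : Integrable (fun θ => phi α₁ α₂ θ ^ n) boxMeas := integrable_phi_pow h₁ h₂ n
  have hpt : ∀ θ ∈ B, 1 / 2 ≤ phi α₁ α₂ θ ^ n := by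
    rintro ⟨s, t⟩ ⟨hs, ht⟩
    have hs' : |s| ≤ r₁ := abs_le.2 ⟨hs.1.le, hs.2⟩
    have ht' : |t| ≤ r₂ := abs_le.2 ⟨ht.1.le, ht.2⟩
    have a1 : |s| ^ α₁ ≤ (K * N)⁻¹ := by rw [← e₁]; gcongr
    have a2 : |t| ^ α₂ ≤ (K * N)⁻¹ := by rw [← e₂]; gcongr
    have b1 := (H₁ s).trans (mul_le_mul_of_nonneg_left a1 hK₁.le)
    have b2 := (H₂ t).trans (mul_le_mul_of_nonneg_left a2 hK₂.le)
    have hgap : 1 - phi α₁ α₂ (s, t) ≤ 1 / (2 * N) := by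
      have : (K₁ + K₂) * (K * N)⁻¹ ≤ 1 / N := by
        rw [← div_eq_mul_inv, div_le_div_iff₀ (by positivity) hN0]
        have : K₁ + K₂ ≤ K := by simp only [K]; linarith
        nlinarith
      have h2 : 1 / (2 * N) = 1 / N / 2 := by field_simp
      rw [h2]
      simp only [phi]
      linarith
    have hbern := one_add_mul_le_pow (a := -(1 / (2 * N))) (by
      have : 1 / (2 * N) ≤ 1 := by rw [div_le_one (by positivity)]; linarith
      linarith) n
    have hle : (n : ℝ) * (1 / (2 * N)) ≤ 1 / 2 := by
      rw [mul_one_div, div_le_div_iff₀ (by positivity) two_pos]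
      simp only [N]; linarith
    have hpow : (1 + -(1 / (2 * N))) ^ n ≤ phi α₁ α₂ (s, t) ^ n := by
      have : 1 / (2 * N) ≤ 1 := by rw [div_le_one (by positivity)]; linarith
      exact pow_le_pow_left₀ (by linarith) (by linarith) n
    linarith
  have hI : 2 * (r₁ * r₂) ≤ ∫ θ, phi α₁ α₂ θ ^ n ∂boxMeas := by
    have hvol : (volume.prod volume : Measure (ℝ × ℝ)).real B = 4 * (r₁ * r₂) := by
      rw [measureReal_prod_prod, Real.volume_real_Ioc_of_le (by linarith),
        Real.volume_real_Ioc_of_le (by linarith)]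
      ring
    rw [hmeas] at hint ⊢
    have hfin : (volume.prod volume : Measure (ℝ × ℝ)) B ≠ ⊤ := by
      rw [Measure.prod_prod]; simp [ENNReal.mul_eq_top]
    calc 2 * (r₁ * r₂) = ∫ θ in B, (1 / 2 : ℝ) ∂(volume.prod volume) := by
          rw [setIntegral_const, hvol, smul_eq_mul]; ring
      _ ≤ ∫ θ in B, phi α₁ α₂ θ ^ n ∂(volume.prod volume) :=
          setIntegral_mono_on (integrableOn_const hfin) (IntegrableOn.mono_set hint hB) hBm hpt
      _ ≤ _ := setIntegral_mono_set hint (Filter.Eventually.of_forall fun θ => hn.pow_nonneg _)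
          (LE.le.eventuallyLE hB)
  have hrr : r₁ * r₂ = K ^ (-(1 / α₁ + 1 / α₂)) * N ^ (-(1 / α₁ + 1 / α₂)) := by
    rw [← Real.mul_rpow hK0.le hN0.le, neg_add, Real.rpow_add (by positivity)]
  rw [convPow_zero_eq h₁ h₂, div_mul_eq_mul_div, mul_assoc, ← hrr]
  gcongr

/-- On `ℤ²` with the standard generators and
`α₁, α₂ ∈ (0,2)`, the return probability of the random walk driven by
`μ_{S,a}` satisfies `μ^{(n)}(0,0) ≍ n^{-1/β}` with `1/β = 1/α₁ + 1/α₂`: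
there are positive constants `c, C, c₂, c₄` with
`c (c₂ n)^{-1/β} ≤ μ^{(n)}(0,0) ≤ C (c₄ n)^{-1/β}` for all `n ≥ 1`. -/
theorem statement7 (α₁ α₂ : ℝ) (h₁ : 0 < α₁) (h₁' : α₁ < 2) (h₂ : 0 < α₂) (h₂' : α₂ < 2) :
    ∃ c C c₂ c₄ : ℝ, 0 < c ∧ 0 < C ∧ 0 < c₂ ∧ 0 < c₄ ∧
      ∀ n : ℕ, 1 ≤ n →
        c * (c₂ * n) ^ (-(1 / α₁ + 1 / α₂)) ≤ convPowZ2 (muZ2 α₁ α₂) n (0, 0) ∧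
        convPowZ2 (muZ2 α₁ α₂) n (0, 0) ≤ C * (c₄ * n) ^ (-(1 / α₁ + 1 / α₂)) := by
  obtain ⟨C, κ, hC, hκ, hup⟩ := exists_upper h₁ h₂
  obtain ⟨c, hc, hlow⟩ := exists_lower_even h₁ h₁' h₂ h₂'
  have hμ : 0 < muZ2 α₁ α₂ 0 := by
    have := cNorm_pos h₁
    have := cNorm_pos h₂
    simp only [muZ2]
    simp
    positivity
  refine ⟨min 1 (muZ2 α₁ α₂ 0) * c, C, 2, κ, by positivity, hC, two_pos, hκ, fun n hn => ?_⟩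
  refine ⟨?_, hup n hn⟩
  change _ ≤ convPowZ2 (muZ2 α₁ α₂) n 0
  have hn1 : (1 : ℝ) ≤ n := by exact_mod_cast hn
  have hexp : -(1 / α₁ + 1 / α₂) ≤ 0 := neg_nonpos.2 (by positivity)
  rcases Nat.even_or_odd' n with ⟨m, rfl | rfl⟩
  · calc min 1 (muZ2 α₁ α₂ 0) * c * (2 * ((2 * m : ℕ) : ℝ)) ^ (-(1 / α₁ + 1 / α₂))
        ≤ 1 * c * (((2 * m : ℕ) : ℝ) + 1) ^ (-(1 / α₁ + 1 / α₂)) := by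
          refine mul_le_mul (mul_le_mul_of_nonneg_right (min_le_left _ _) hc.le)
            (Real.rpow_le_rpow_of_nonpos (by positivity) (by linarith) hexp) (by positivity)
            (by positivity)
      _ ≤ _ := by rw [one_mul]; exact hlow _ (even_two_mul m)
  -- an odd time is reached from the preceding even one by holding for one step
  · refine le_trans ?_ (convPow_succ_ge h₁ h₂ (2 * m))
    rw [mul_assoc]
    refine mul_le_mul (min_le_right _ _) (le_trans ?_ (hlow _ (even_two_mul m)))
      (by positivity) hμ.le
    refine mul_le_mul_of_nonneg_left (Real.rpow_le_rpow_of_nonpos (by positivity) ?_ hexp) hc.le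
    push_cast
    linarith [(Nat.cast_nonneg m : (0 : ℝ) ≤ m)]
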